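/- arXiv:1910.05648 — 2 statements merged into one kernel-verified Lean document; each statement's English description precedes it below -/
import Mathlib

section
/- For every integer r ≥ 1, the set of finite sums ∑_{i=1}^N p_i · ∇q_i, where N ∈ ℕ and p_i, q_i are real polynomials in 2 variables of total degree at most r and ∇q = (∂q/∂x₁, ∂q/∂x₂) is the gradient (the pair of partial derivatives), is exactly the set of pairs (v₁, v₂) of real polynomials in 2 variables, each of total degree at most 2r − 1. -/
/-!
Let `S` be the span of the fields `p ∇q` with `deg p ≤ a` and `deg q ≤ b`, where `b ≤ a` and `b`
is invertible. For `deg f < a` and `deg g < b`, the Leibniz rule gives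
`f g (X_i ∇X_j - X_j ∇X_i) = X_i f ∇(X_j g) - X_j f ∇(X_i g) ∈ S`. If `h` is homogeneous of degree
`b`, Euler's identity `∑ⱼ X_j ∂_j h = b h` then yields
`b f h ∇X_k = ∑ⱼ f ∂_j h (X_j ∇X_k - X_k ∇X_j) + X_k f ∇h ∈ S`.
Together with the fields `p ∇X_k`, `deg p ≤ a`, these exhaust the fields of degree less than
`a + b`, because a monomial of degree at least `b` has a divisor of degree exactly `b`.
-/

section PolynomialGradient

open MvPolynomial

section CommSemiring

variable {σ R : Type*} [CommSemiring R]

theorem totalDegree_pderiv_le (k : σ) (q : MvPolynomial σ R) :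
    (pderiv k q).totalDegree ≤ q.totalDegree - 1 := by
  conv_lhs => rw [← sum_homogeneousComponent q, map_sum]
  refine totalDegree_finsetSum_le fun i hi => ?_
  have hi' : i < q.totalDegree + 1 := Finset.mem_range.mp hi
  exact (homogeneousComponent_isHomogeneous i q).pderiv.totalDegree_le.trans (by omega)

theorem mul_mem_restrictTotalDegree {m n : ℕ} {p q : MvPolynomial σ R}
    (hp : p ∈ restrictTotalDegree σ R m) (hq : q ∈ restrictTotalDegree σ R n) :
    p * q ∈ restrictTotalDegree σ R (m + n) := by
  rw [mem_restrictTotalDegree] at *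
  exact (totalDegree_mul p q).trans (add_le_add hp hq)

theorem X_mem_restrictTotalDegree (i : σ) {n : ℕ} (hn : 1 ≤ n) :
    X i ∈ restrictTotalDegree σ R n :=
  (mem_restrictTotalDegree _ _ _).mpr ((isHomogeneous_X R i).totalDegree_le.trans hn)

theorem X_mul_mem_restrictTotalDegree (i : σ) {n : ℕ} {p : MvPolynomial σ R}
    (hp : p ∈ restrictTotalDegree σ R n) : X i * p ∈ restrictTotalDegree σ R (n + 1) :=
  add_comm 1 n ▸ mul_mem_restrictTotalDegree (X_mem_restrictTotalDegree i le_rfl) hp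

theorem restrictTotalDegree_mono {m n : ℕ} (hmn : m ≤ n) :
    restrictTotalDegree σ R m ≤ restrictTotalDegree σ R n := fun p hp => by
  rw [mem_restrictTotalDegree] at *
  exact hp.trans hmn

theorem monomial_mem_restrictTotalDegree {n : ℕ} {s : σ →₀ ℕ} (hs : s.degree ≤ n) (c : R) :
    monomial s c ∈ restrictTotalDegree σ R n :=
  (mem_restrictTotalDegree _ _ _).mpr ((totalDegree_monomial_le s c).trans hs)

theorem restrictTotalDegree_add_le_sup_mul (m n : ℕ) :
    restrictTotalDegree σ R (m + n) ≤
      restrictTotalDegree σ R m ⊔ homogeneousSubmodule σ R m * restrictTotalDegree σ R n := by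
  intro p hp
  rw [p.as_sum]
  refine Submodule.sum_mem _ fun s hs => ?_
  have hdeg : s.degree ≤ m + n :=
    (le_totalDegree hs).trans ((mem_restrictTotalDegree _ _ _).mp hp)
  rcases le_total s.degree m with hsm | hms
  · exact Submodule.mem_sup_left (monomial_mem_restrictTotalDegree hsm _)
  · obtain ⟨t, hts, ht⟩ := Finsupp.exists_le_degree_eq s m hms
    obtain ⟨u, rfl⟩ := exists_add_of_le hts
    have hu : u.degree ≤ n := by
      rw [map_add] at hdeg
      omega
    rw [← one_mul (coeff (t + u) p), ← monomial_mul]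
    exact Submodule.mem_sup_right (Submodule.mul_mem_mul (isHomogeneous_monomial 1 ht)
      (monomial_mem_restrictTotalDegree hu _))

/-- The gradient `∇q = (∂q/∂x_k)_k` of a polynomial, bundled as a derivation into the module of
polynomial vector fields. -/
noncomputable def polyGradient : Derivation R (MvPolynomial σ R) (σ → MvPolynomial σ R) where
  toLinearMap := LinearMap.pi fun k => (pderiv k).toLinearMap
  map_one_eq_zero' := funext fun _ => pderiv_one
  leibniz' p q := funext fun k => (pderiv k).leibniz p q

theorem polyGradient_apply (q : MvPolynomial σ R) (k : σ) : polyGradient q k = pderiv k q :=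
  rfl

theorem sum_smul_polyGradient_X [Fintype σ] (v : σ → MvPolynomial σ R) :
    ∑ k, v k • polyGradient (X k : MvPolynomial σ R) = v := by
  classical
  ext1 k
  simp [polyGradient_apply, pderiv_X, Pi.single_apply]

/-- The space `P_a ∇P_b` of polynomial vector fields spanned over `R` by the products `p ∇q` with
`p` of total degree at most `a` and `q` of total degree at most `b`. -/
noncomputable def gradientSpan (σ R : Type*) [CommSemiring R] (a b : ℕ) :
    Submodule R (σ → MvPolynomial σ R) :=
  Submodule.span R (Set.image2 (fun p q : MvPolynomial σ R => p • polyGradient q)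
    (restrictTotalDegree σ R a) (restrictTotalDegree σ R b))

theorem smul_polyGradient_mem_gradientSpan {a b : ℕ} {p q : MvPolynomial σ R}
    (hp : p ∈ restrictTotalDegree σ R a) (hq : q ∈ restrictTotalDegree σ R b) :
    p • polyGradient q ∈ gradientSpan σ R a b :=
  Submodule.subset_span (Set.mem_image2_of_mem hp hq)

theorem mem_gradientSpan_iff {a b : ℕ} {v : σ → MvPolynomial σ R} :
    v ∈ gradientSpan σ R a b ↔ ∃ (N : ℕ) (p q : Fin N → MvPolynomial σ R),
      (∀ i, (p i).totalDegree ≤ a) ∧ (∀ i, (q i).totalDegree ≤ b) ∧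
      ∀ k, v k = ∑ i, p i * pderiv k (q i) := by
  constructor
  · intro hv
    obtain ⟨N, c, w, rfl⟩ := Submodule.mem_span_set'.mp hv
    choose p hp q hq hw using fun i => (w i).2
    refine ⟨N, fun i => c i • p i, q, fun i => ?_, fun i => ?_, fun k => ?_⟩
    · exact (mem_restrictTotalDegree _ _ _).mp (Submodule.smul_mem _ (c i) (hp i))
    · exact (mem_restrictTotalDegree _ _ _).mp (hq i)
    · simp only [← hw, Finset.sum_apply, Pi.smul_apply, polyGradient_apply, smul_eq_mul,
        smul_mul_assoc]
  · rintro ⟨N, p, q, hp, hq, hv⟩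
    have hv' : v = ∑ i, p i • polyGradient (q i) := by
      ext1 k
      simp only [hv, Finset.sum_apply, Pi.smul_apply, polyGradient_apply, smul_eq_mul]
    rw [hv']
    exact Submodule.sum_mem _ fun i _ => smul_polyGradient_mem_gradientSpan
      ((mem_restrictTotalDegree _ _ _).mpr (hp i)) ((mem_restrictTotalDegree _ _ _).mpr (hq i))

theorem gradientSpan_le_pi_restrictTotalDegree (a : ℕ) {b : ℕ} (hb : 1 ≤ b) :
    gradientSpan σ R a b ≤
      Submodule.pi Set.univ fun _ => restrictTotalDegree σ R (a + b - 1) := by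
  refine Submodule.span_le.mpr ?_
  rintro _ ⟨p, hp, q, hq, rfl⟩ k -
  have hq' : pderiv k q ∈ restrictTotalDegree σ R (b - 1) :=
    (mem_restrictTotalDegree _ _ _).mpr ((totalDegree_pderiv_le k q).trans
      (Nat.sub_le_sub_right ((mem_restrictTotalDegree _ _ _).mp hq) 1))
  simpa only [SetLike.mem_coe, Pi.smul_apply, polyGradient_apply, smul_eq_mul,
    Nat.add_sub_assoc hb] using mul_mem_restrictTotalDegree hp hq'

end CommSemiring

variable {σ R : Type*} [CommRing R]

theorem mul_smul_rotation_mem_gradientSpan (i j : σ) {m n : ℕ} {f g : MvPolynomial σ R}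
    (hf : f ∈ restrictTotalDegree σ R m) (hg : g ∈ restrictTotalDegree σ R n) :
    (f * g) • ((X i : MvPolynomial σ R) • polyGradient (X j) -
      (X j : MvPolynomial σ R) • polyGradient (X i)) ∈ gradientSpan σ R (m + 1) (n + 1) := by
  have hmem (i j : σ) :
      (X i * f) • polyGradient (X j * g) ∈ gradientSpan σ R (m + 1) (n + 1) :=
    smul_polyGradient_mem_gradientSpan (X_mul_mem_restrictTotalDegree i hf)
      (X_mul_mem_restrictTotalDegree j hg)
  convert Submodule.sub_mem _ (hmem i j) (hmem j i) using 1
  simp only [Derivation.leibniz]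
  module

theorem natCast_smul_mul_smul_polyGradient_X [Fintype σ] (k : σ) {d : ℕ} (f : MvPolynomial σ R)
    {h : MvPolynomial σ R} (hh : h.IsHomogeneous d) :
    (d : R) • (f * h) • polyGradient (X k : MvPolynomial σ R) =
      ∑ j, (f * pderiv j h) • ((X j : MvPolynomial σ R) • polyGradient (X k) -
        (X k : MvPolynomial σ R) • polyGradient (X j)) + (X k * f) • polyGradient h := by
  have heuler : (d : R) • (f * h) = ∑ j, f * (X j * pderiv j h) := by
    rw [Nat.cast_smul_eq_nsmul, ← mul_smul_comm, ← hh.sum_X_mul_pderiv, Finset.mul_sum]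
  conv_rhs => rw [← sum_smul_polyGradient_X (polyGradient h), Finset.smul_sum,
    ← Finset.sum_add_distrib]
  rw [← smul_assoc, heuler, Finset.sum_smul]
  refine Finset.sum_congr rfl fun j _ => ?_
  rw [polyGradient_apply]
  module

theorem mul_smul_polyGradient_X_mem_gradientSpan [Finite σ] (k : σ) {m n : ℕ}
    (hn : IsUnit ((n + 1 : ℕ) : R)) {f h : MvPolynomial σ R}
    (hf : f ∈ restrictTotalDegree σ R m) (hh : h.IsHomogeneous (n + 1)) :
    (f * h) • polyGradient (X k : MvPolynomial σ R) ∈ gradientSpan σ R (m + 1) (n + 1) := by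
  have := Fintype.ofFinite σ
  have hderiv (j : σ) : pderiv j h ∈ restrictTotalDegree σ R n :=
    (mem_restrictTotalDegree _ _ _).mpr hh.pderiv.totalDegree_le
  have hhdeg : h ∈ restrictTotalDegree σ R (n + 1) :=
    (mem_restrictTotalDegree _ _ _).mpr hh.totalDegree_le
  rw [← Submodule.smul_mem_iff_of_isUnit _ hn, natCast_smul_mul_smul_polyGradient_X k f hh]
  exact Submodule.add_mem _
    (Submodule.sum_mem _ fun j _ => mul_smul_rotation_mem_gradientSpan j k hf (hderiv j))
    (smul_polyGradient_mem_gradientSpan (X_mul_mem_restrictTotalDegree k hf) hhdeg)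

theorem smul_polyGradient_X_mem_gradientSpan [Finite σ] (k : σ) {m n : ℕ} (hnm : n ≤ m)
    (hn : IsUnit ((n + 1 : ℕ) : R)) {p : MvPolynomial σ R}
    (hp : p ∈ restrictTotalDegree σ R (n + 1 + m)) :
    p • polyGradient (X k : MvPolynomial σ R) ∈ gradientSpan σ R (m + 1) (n + 1) := by
  let toCoord : MvPolynomial σ R →ₗ[R] σ → MvPolynomial σ R :=
    (LinearMap.toSpanSingleton _ _ (polyGradient (X k : MvPolynomial σ R))).restrictScalars R
  have hlow : restrictTotalDegree σ R (n + 1) ≤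
      (gradientSpan σ R (m + 1) (n + 1)).comap toCoord := fun f hf =>
    smul_polyGradient_mem_gradientSpan (restrictTotalDegree_mono (Nat.succ_le_succ hnm) hf)
      (X_mem_restrictTotalDegree k n.succ_pos)
  have hhigh : homogeneousSubmodule σ R (n + 1) * restrictTotalDegree σ R m ≤
      (gradientSpan σ R (m + 1) (n + 1)).comap toCoord :=
    Submodule.mul_le.mpr fun h hh f hf =>
      mul_comm f h ▸ mul_smul_polyGradient_X_mem_gradientSpan k hn hf hh
  exact sup_le hlow hhigh (restrictTotalDegree_add_le_sup_mul (n + 1) m hp)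

theorem gradientSpan_eq_pi_restrictTotalDegree [Finite σ] {a b : ℕ} (hb : 1 ≤ b) (hba : b ≤ a)
    (hunit : IsUnit (b : R)) :
    gradientSpan σ R a b =
      Submodule.pi Set.univ fun _ => restrictTotalDegree σ R (a + b - 1) := by
  have := Fintype.ofFinite σ
  refine (gradientSpan_le_pi_restrictTotalDegree a hb).antisymm fun v hv => ?_
  obtain ⟨n, rfl⟩ := Nat.exists_eq_add_of_le' hb
  obtain ⟨m, rfl⟩ := Nat.exists_eq_add_of_le' (hb.trans hba)
  rw [show m + 1 + (n + 1) - 1 = n + 1 + m by omega] at hv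
  rw [← sum_smul_polyGradient_X v]
  exact Submodule.sum_mem _ fun k _ =>
    smul_polyGradient_X_mem_gradientSpan k (Nat.le_of_succ_le_succ hba) hunit (hv k trivial)

theorem sums_of_p_grad_q_two_vars_general {σ R : Type*} [Finite σ] [CommRing R] {a b : ℕ}
    (hb : 1 ≤ b) (hba : b ≤ a) (hunit : IsUnit (b : R)) :
    {v : σ → MvPolynomial σ R |
      ∃ (N : ℕ) (p q : Fin N → MvPolynomial σ R),
        (∀ i, (p i).totalDegree ≤ a) ∧ (∀ i, (q i).totalDegree ≤ b) ∧
        ∀ k, v k = ∑ i, p i * pderiv k (q i)} =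
    {v : σ → MvPolynomial σ R | ∀ k, (v k).totalDegree ≤ a + b - 1} := by
  ext v
  simp only [Set.mem_ofPred_eq, ← mem_gradientSpan_iff, Submodule.mem_pi, Set.mem_univ,
    forall_const, mem_restrictTotalDegree, gradientSpan_eq_pi_restrictTotalDegree hb hba hunit]

end PolynomialGradient

/-- Lemma C.2 of the paper for `n = 2`: for `r ≥ 1`, the set of finite sums
`∑ᵢ pᵢ ∇qᵢ` with `pᵢ, qᵢ` real polynomials in two variables of total degree at
most `r` is exactly the set of pairs of real polynomials in two variables of
total degree at most `2r - 1`. -/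
theorem sums_of_p_grad_q_two_vars (r : ℕ) (hr : 1 ≤ r) :
    {v : MvPolynomial (Fin 2) ℝ × MvPolynomial (Fin 2) ℝ |
      ∃ (N : ℕ) (p q : Fin N → MvPolynomial (Fin 2) ℝ),
        (∀ i, (p i).totalDegree ≤ r) ∧ (∀ i, (q i).totalDegree ≤ r) ∧
        v.1 = ∑ i, p i * MvPolynomial.pderiv 0 (q i) ∧
        v.2 = ∑ i, p i * MvPolynomial.pderiv 1 (q i)} =
    {v : MvPolynomial (Fin 2) ℝ × MvPolynomial (Fin 2) ℝ |
      v.1.totalDegree ≤ 2 * r - 1 ∧ v.2.totalDegree ≤ 2 * r - 1} := by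
  have hunit : IsUnit (r : ℝ) := (Nat.cast_ne_zero.mpr (by omega)).isUnit
  ext v
  simpa [Fin.forall_fin_two, two_mul] using
    Set.ext_iff.mp (sums_of_p_grad_q_two_vars_general (σ := Fin 2) hr le_rfl hunit) ![v.1, v.2]
end

section
/- Let (Ω, μ) be a measure space, n ≥ 1 an integer, and Δt > 0 a real number. Let u₀, u₁, R : Ω → ℝⁿ and D₀, D₁, Φ, E₀, E₁, F, G : Ω → ℝ be measurable functions such that every product of these functions appearing below is μ-integrable, and set u_{1/2} := (u₀ + u₁)/2. Assume: (i) the discrete-gradient relation (D₁ − D₀)·F = (D₁ − D₀)·( (1/2) u₀·u₁ + u_{1/2}·R − Φ ) − (E₁ − E₀) holds μ-almost everywhere; (ii) the discrete momentum equation tested at u_{1/2} holds: (1/Δt) ∫_Ω ( D₁ (u₁ + R) − D₀ (u₀ + R) ) · u_{1/2} dμ + ∫_Ω F·G dμ = 0; (iii) the discrete continuity equation tested at F holds: ∫_Ω ((D₁ − D₀)/Δt)·F dμ + ∫_Ω G·F dμ = 0. Then the total energy is preserved: ∫_Ω ( (1/2) D₁ |u₁|² + E₁ + D₁ Φ ) dμ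 = ∫_Ω ( (1/2) D₀ |u₀|² + E₀ + D₀ Φ ) dμ. -/
open MeasureTheory
open scoped RealInnerProductSpace

/-!
The half-step velocity turns the increment of `D u` into the increment of `(1/2) D |u|²`, up to the
term `(D₁ - D₀) (1/2) u₀ · u₁`, which the discrete gradient `F` absorbs together with the rotation
term. Hence, almost everywhere, the tested momentum increment equals `(D₁ - D₀) F` plus the
increment of the energy density. The momentum and continuity equations contain the same transport
term `∫ F G`, so the increments `∫ (D₁ - D₀) F` cancel and only the energy increment remains.
-/

section EnergyBalance

variable {V : Type*} [NormedAddCommGroup V] {Ω : Type*} [MeasurableSpace Ω] {μ : Measure Ω}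

/-- The total energy density of a fluid with mass density `D`, velocity `u`, internal energy density
`E` (that is, `D e(D)`) and gravitational potential `Φ`, all taken at a single point. -/
noncomputable def totalEnergyDensity (D : ℝ) (u : V) (E Φ : ℝ) : ℝ :=
  (1 / 2) * D * ‖u‖ ^ 2 + E + D * Φ

theorem integrable_totalEnergyDensity {D Φ E : Ω → ℝ} {u : Ω → V}
    (hkin : Integrable (fun x => D x * ‖u x‖ ^ 2) μ) (hE : Integrable E μ)
    (hpot : Integrable (fun x => D x * Φ x) μ) :
    Integrable (fun x => totalEnergyDensity (D x) (u x) (E x) (Φ x)) μ := by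
  simpa only [totalEnergyDensity, mul_assoc] using
    ((hkin.const_mul (1 / 2)).fun_add hE).fun_add hpot

variable [InnerProductSpace ℝ V]

theorem inner_smul_sub_smul_half_add (a b : ℝ) (u v : V) :
    ⟪a • u - b • v, (1 / 2 : ℝ) • (v + u)⟫ =
      (a - b) * ((1 / 2) * ⟪v, u⟫) + ((1 / 2) * a * ‖u‖ ^ 2 - (1 / 2) * b * ‖v‖ ^ 2) := by
  simp only [inner_sub_left, inner_add_right, real_inner_smul_left, real_inner_smul_right,
    real_inner_self_eq_norm_sq, real_inner_comm v u]
  ring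

theorem inner_momentum_sub_half_add_of_discrete_gradient {D₀ D₁ Φ E₀ E₁ F : ℝ} {u₀ u₁ R : V}
    (hF : (D₁ - D₀) * F =
      (D₁ - D₀) * ((1 / 2) * ⟪u₀, u₁⟫ + ⟪(1 / 2 : ℝ) • (u₀ + u₁), R⟫ - Φ) - (E₁ - E₀)) :
    ⟪D₁ • (u₁ + R) - D₀ • (u₀ + R), (1 / 2 : ℝ) • (u₀ + u₁)⟫ =
      (D₁ - D₀) * F + (totalEnergyDensity D₁ u₁ E₁ Φ - totalEnergyDensity D₀ u₀ E₀ Φ) := by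
  have split_rotation : D₁ • (u₁ + R) - D₀ • (u₀ + R) =
      (D₁ • u₁ - D₀ • u₀) + (D₁ - D₀) • R := by module
  rw [split_rotation, inner_add_left, inner_smul_sub_smul_half_add, real_inner_smul_left,
    real_inner_comm _ R, hF, totalEnergyDensity, totalEnergyDensity]
  ring

variable {D₀ D₁ Φ E₀ E₁ F : Ω → ℝ} {u₀ u₁ R : Ω → V}

theorem integral_inner_momentum_sub_half_add_of_discrete_gradient
    (he₀ : Integrable (fun x => totalEnergyDensity (D₀ x) (u₀ x) (E₀ x) (Φ x)) μ)
    (he₁ : Integrable (fun x => totalEnergyDensity (D₁ x) (u₁ x) (E₁ x) (Φ x)) μ)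
    (hDF : Integrable (fun x => (D₁ x - D₀ x) * F x) μ)
    (hF : ∀ᵐ x ∂μ, (D₁ x - D₀ x) * F x =
      (D₁ x - D₀ x) * ((1 / 2) * ⟪u₀ x, u₁ x⟫
        + ⟪(1 / 2 : ℝ) • (u₀ x + u₁ x), R x⟫ - Φ x) - (E₁ x - E₀ x)) :
    ∫ x, ⟪D₁ x • (u₁ x + R x) - D₀ x • (u₀ x + R x), (1 / 2 : ℝ) • (u₀ x + u₁ x)⟫ ∂μ =
      ∫ x, (D₁ x - D₀ x) * F x ∂μ +
        (∫ x, totalEnergyDensity (D₁ x) (u₁ x) (E₁ x) (Φ x) ∂μ -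
          ∫ x, totalEnergyDensity (D₀ x) (u₀ x) (E₀ x) (Φ x) ∂μ) := by
  rw [← integral_sub he₁ he₀, ← integral_add hDF (he₁.sub' he₀)]
  exact integral_congr_ae (hF.mono fun _ => inner_momentum_sub_half_add_of_discrete_gradient)

/-- `T` stands for the transport term `∫ F G`. -/
theorem energy_preservation_rotating_barotropic_general {Δt T : ℝ} (hΔt : Δt ≠ 0)
    (he₀ : Integrable (fun x => totalEnergyDensity (D₀ x) (u₀ x) (E₀ x) (Φ x)) μ)
    (he₁ : Integrable (fun x => totalEnergyDensity (D₁ x) (u₁ x) (E₁ x) (Φ x)) μ)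
    (hDF : Integrable (fun x => (D₁ x - D₀ x) * F x) μ)
    (hF : ∀ᵐ x ∂μ, (D₁ x - D₀ x) * F x =
      (D₁ x - D₀ x) * ((1 / 2) * ⟪u₀ x, u₁ x⟫
        + ⟪(1 / 2 : ℝ) • (u₀ x + u₁ x), R x⟫ - Φ x) - (E₁ x - E₀ x))
    (hmomentum : (1 / Δt) * ∫ x, ⟪D₁ x • (u₁ x + R x) - D₀ x • (u₀ x + R x),
        (1 / 2 : ℝ) • (u₀ x + u₁ x)⟫ ∂μ + T = 0)
    (hcontinuity : ∫ x, (D₁ x - D₀ x) / Δt * F x ∂μ + T = 0) :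
    ∫ x, totalEnergyDensity (D₁ x) (u₁ x) (E₁ x) (Φ x) ∂μ =
      ∫ x, totalEnergyDensity (D₀ x) (u₀ x) (E₀ x) (Φ x) ∂μ := by
  have pull_out_step : ∫ x, (D₁ x - D₀ x) / Δt * F x ∂μ =
      (1 / Δt) * ∫ x, (D₁ x - D₀ x) * F x ∂μ := by
    rw [← integral_const_mul]
    congr with x
    ring
  have momentum_eq_mass :
      ∫ x, ⟪D₁ x • (u₁ x + R x) - D₀ x • (u₀ x + R x), (1 / 2 : ℝ) • (u₀ x + u₁ x)⟫ ∂μ =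
        ∫ x, (D₁ x - D₀ x) * F x ∂μ := by
    rw [pull_out_step] at hcontinuity
    exact mul_left_cancel₀ (one_div_ne_zero hΔt)
      (add_right_cancel (hmomentum.trans hcontinuity.symm))
  rw [integral_inner_momentum_sub_half_add_of_discrete_gradient he₀ he₁ hDF hF] at momentum_eq_mass
  exact sub_eq_zero.mp (add_eq_left.mp momentum_eq_mass)

end EnergyBalance

/-- Energy preservation of the variational time discretization of the rotating
barotropic compressible fluid (Proposition of Section 5 of the paper). -/
theorem energy_preservation_rotating_barotropic
    {Ω : Type*} [MeasurableSpace Ω] (μ : Measure Ω) (n : ℕ) (hn : 1 ≤ n)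
    (Δt : ℝ) (hΔt : 0 < Δt)
    (u₀ u₁ R : Ω → EuclideanSpace ℝ (Fin n))
    (D₀ D₁ Φ E₀ E₁ F G : Ω → ℝ)
    (hu₀ : Measurable u₀) (hu₁ : Measurable u₁) (hR : Measurable R)
    (hD₀ : Measurable D₀) (hD₁ : Measurable D₁) (hΦ : Measurable Φ)
    (hE₀ : Measurable E₀) (hE₁ : Measurable E₁)
    (hF : Measurable F) (hG : Measurable G)
    -- integrability of every product of these functions appearing below
    (hint₁ : Integrable (fun x => D₀ x * ‖u₀ x‖ ^ 2) μ)
    (hint₂ : Integrable (fun x => D₁ x * ‖u₁ x‖ ^ 2) μ)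
    (hint₃ : Integrable (fun x => D₀ x * ⟪u₀ x, u₁ x⟫) μ)
    (hint₄ : Integrable (fun x => D₁ x * ⟪u₀ x, u₁ x⟫) μ)
    (hint₅ : Integrable (fun x => D₀ x * ⟪u₀ x, R x⟫) μ)
    (hint₆ : Integrable (fun x => D₀ x * ⟪u₁ x, R x⟫) μ)
    (hint₇ : Integrable (fun x => D₁ x * ⟪u₀ x, R x⟫) μ)
    (hint₈ : Integrable (fun x => D₁ x * ⟪u₁ x, R x⟫) μ)
    (hint₉ : Integrable (fun x => D₀ x * Φ x) μ)
    (hint₁₀ : Integrable (fun x => D₁ x * Φ x) μ)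
    (hintE₀ : Integrable E₀ μ) (hintE₁ : Integrable E₁ μ)
    (hintFG : Integrable (fun x => F x * G x) μ)
    (hintD₀F : Integrable (fun x => D₀ x * F x) μ)
    (hintD₁F : Integrable (fun x => D₁ x * F x) μ)
    -- (i) the discrete-gradient relation, μ-almost everywhere
    (hi : ∀ᵐ x ∂μ, (D₁ x - D₀ x) * F x =
      (D₁ x - D₀ x) * ((1 / 2) * ⟪u₀ x, u₁ x⟫
        + ⟪(1 / 2 : ℝ) • (u₀ x + u₁ x), R x⟫ - Φ x) - (E₁ x - E₀ x))
    -- (ii) the discrete momentum equation tested at `u_{1/2}`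
    (hii : (1 / Δt) * ∫ x, ⟪D₁ x • (u₁ x + R x) - D₀ x • (u₀ x + R x),
        (1 / 2 : ℝ) • (u₀ x + u₁ x)⟫ ∂μ + ∫ x, F x * G x ∂μ = 0)
    -- (iii) the discrete continuity equation tested at `F`
    (hiii : ∫ x, (D₁ x - D₀ x) / Δt * F x ∂μ + ∫ x, G x * F x ∂μ = 0) :
    ∫ x, ((1 / 2) * D₁ x * ‖u₁ x‖ ^ 2 + E₁ x + D₁ x * Φ x) ∂μ =
    ∫ x, ((1 / 2) * D₀ x * ‖u₀ x‖ ^ 2 + E₀ x + D₀ x * Φ x) ∂μ :=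
  energy_preservation_rotating_barotropic_general hΔt.ne'
    (integrable_totalEnergyDensity hint₁ hintE₀ hint₉)
    (integrable_totalEnergyDensity hint₂ hintE₁ hint₁₀)
    (by simpa only [sub_mul] using hintD₁F.sub' hintD₀F) hi hii
    (by simpa only [mul_comm (G _)] using hiii)
end
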